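/- Let a, a', b, b' be integers satisfying 1 ≤ a ≤ a' ≤ b ≤ b' ≤ n. Then in W one has the identity w_a^b · w_{a'}^{b'} = w_{a'+1}^{b'} · w_a^{b−1}. -/

import Mathlib

open scoped Pointwise
open Matrix

noncomputable section

/-- The simple reflection `s_i` (1-based indexing, `1 ≤ i ≤ n`), i.e. the transposition
`(i, i+1)` of `{1, …, n+1}`, as a permutation of `Fin (n+1)`; junk value `1` outside the range. -/
def sRef (n i : ℕ) : Equiv.Perm (Fin (n + 1)) :=
  if h : 1 ≤ i ∧ i ≤ n then Equiv.swap ⟨i - 1, by omega⟩ ⟨i, by omega⟩ else 1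

/-- `w_r^{r'} = s_r s_{r+1} ⋯ s_{r'}` (equal to `1` when `r = r' + 1`). -/
def wRR (n r r' : ℕ) : Equiv.Perm (Fin (n + 1)) :=
  ((List.range' r (r' + 1 - r)).map (sRef n)).prod

/-- The subgroup `W_I` of the Weyl group generated by the `s_i`, `i ∈ I`. -/
def WI (n : ℕ) (I : Finset ℕ) : Subgroup (Equiv.Perm (Fin (n + 1))) :=
  Subgroup.closure (sRef n '' I)

/-- `w_i = w_i^n w_{i-1}^{n-1} ⋯ w_1^{n-i+1}`. -/
def wBig (n i : ℕ) : Equiv.Perm (Fin (n + 1)) :=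
  ((List.range i).map fun t => wRR n (i - t) (n - t)).prod

/-- `w_{r_k}^n w_{r_{k-1}}^{n-1} ⋯ w_{r_1}^{n-k+1}` for a tuple `r : Fin k → ℕ`
(where `r ι` is the paper's `r_{ι+1}`). -/
def wProd (n k : ℕ) (r : Fin k → ℕ) : Equiv.Perm (Fin (n + 1)) :=
  (List.ofFn fun t : Fin k => wRR n (r t.rev) (n - (t : ℕ))).prod

/-- The Coxeter length of `w` with respect to the generators `s_1, …, s_n`. -/
def lenW (n : ℕ) (w : Equiv.Perm (Fin (n + 1))) : ℕ :=
  sInf { d | ∃ f : Fin d → ℕ, (∀ m, f m ∈ Finset.Icc 1 n) ∧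
    (List.ofFn fun m => sRef n (f m)).prod = w }

theorem sRef_val (n i : ℕ) (h1 : 1 ≤ i) (h2 : i ≤ n) (x : Fin (n + 1)) :
    ((sRef n i x : Fin (n + 1)) : ℕ) =
      if (x : ℕ) + 1 = i then i else if (x : ℕ) = i then i - 1 else x := by
  rw [sRef, dif_pos ⟨h1, h2⟩, Equiv.swap_apply_def]
  simp only [Fin.ext_iff]
  split_ifs <;> first | rfl | omega

theorem range_prod_val (n k : ℕ) : ∀ r : ℕ, 1 ≤ r → r + k ≤ n + 1 → ∀ x : Fin (n + 1),
    (((((List.range' r k).map (sRef n)).prod) x : Fin (n + 1)) : ℕ) =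
      if r ≤ (x : ℕ) + 1 ∧ (x : ℕ) + 1 < r + k then (x : ℕ) + 1
      else if (x : ℕ) + 1 = r + k then r - 1 else x := by
  induction k with
  | zero =>
    intro r hr hk x
    simp only [List.range'_zero, List.map_nil, List.prod_nil, Equiv.Perm.coe_one, id_eq]
    split_ifs <;> omega
  | succ k ih =>
    intro r hr hk x
    rw [List.range'_succ, List.map_cons, List.prod_cons, Equiv.Perm.mul_apply,
      sRef_val n r hr (by omega), ih (r + 1) (by omega) (by omega) x]
    split_ifs <;> omega

theorem wRR_val (n r r' : ℕ) (hr : 1 ≤ r) (h : r ≤ r' + 1) (hn : r' ≤ n) (x : Fin (n + 1)) :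
    ((wRR n r r' x : Fin (n + 1)) : ℕ) =
      if r ≤ (x : ℕ) + 1 ∧ (x : ℕ) < r' then (x : ℕ) + 1
      else if (x : ℕ) = r' then r - 1 else x := by
  rw [wRR, range_prod_val n _ r hr (by omega)]
  split_ifs <;> omega

/-- For integers `1 ≤ a ≤ a' ≤ b ≤ b' ≤ n` one has, in the Weyl group
`W = S_{n+1}`, the identity `w_a^b · w_{a'}^{b'} = w_{a'+1}^{b'} · w_a^{b-1}`. -/
theorem stmt13 (n : ℕ) (hn : 1 ≤ n) (a a' b b' : ℕ)
    (ha : 1 ≤ a) (haa' : a ≤ a') (ha'b : a' ≤ b) (hbb' : b ≤ b') (hb'n : b' ≤ n) :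
    wRR n a b * wRR n a' b' = wRR n (a' + 1) b' * wRR n a (b - 1) := by
  ext x
  rw [Equiv.Perm.mul_apply, Equiv.Perm.mul_apply,
    wRR_val n a b ha (by omega) (by omega), wRR_val n a' b' (by omega) (by omega) hb'n,
    wRR_val n (a' + 1) b' (by omega) (by omega) hb'n,
    wRR_val n a (b - 1) ha (by omega) (by omega)]
  split_ifs <;> omega
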